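/- Let μ1, μ2 ∈ P_2(ℝ^d) and θ ∈ S^{d−1}. Then the set Γ_{θ,1,2}(μ1,μ2) := { ρ_{1,2} : ρ ∈ Γ(μ_θ[μ1,μ2], μ1, μ2) } of (second,third)-bimarginals of admissible 3-plans equals Ω_θ(μ1,μ2), and consequently PS_θ(μ1, μ2) = CW_θ(μ1, μ2). -/

import Mathlib

open MeasureTheory Filter Topology ProbabilityTheory
open scoped ENNReal RealInnerProductSpace Classical

noncomputable section

/-- Euclidean space ℝ^d. -/
abbrev Euc (d : ℕ) : Type := EuclideanSpace ℝ (Fin d)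

/-- `P2` : Borel probability measures with finite second moment. -/
def P2 {E : Type*} [NormedAddCommGroup E] [MeasurableSpace E] : Set (Measure E) :=
  {μ | IsProbabilityMeasure μ ∧ Integrable (fun x => ‖x‖ ^ 2) μ}

/-- Couplings between two measures. -/
def Coupling {E F : Type*} [MeasurableSpace E] [MeasurableSpace F]
    (μ : Measure E) (ν : Measure F) : Set (Measure (E × F)) :=
  {π | IsProbabilityMeasure π ∧ π.map Prod.fst = μ ∧ π.map Prod.snd = ν}

/-- Quadratic transport cost of a plan. -/
def tCost {E : Type*} [NormedAddCommGroup E] [MeasurableSpace E]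
    (π : Measure (E × E)) : ℝ :=
  ∫ p, ‖p.1 - p.2‖ ^ 2 ∂π

/-- Squared 2-Wasserstein distance. -/
def W2sq {E : Type*} [NormedAddCommGroup E] [MeasurableSpace E] (μ ν : Measure E) : ℝ :=
  sInf (tCost '' Coupling μ ν)

/-- 2-Wasserstein distance. -/
def W2 {E : Type*} [NormedAddCommGroup E] [MeasurableSpace E] (μ ν : Measure E) : ℝ :=
  Real.sqrt (W2sq μ ν)

/-- Optimal transport plans for the quadratic cost. -/
def OptPlan {E : Type*} [NormedAddCommGroup E] [MeasurableSpace E]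
    (μ ν : Measure E) : Set (Measure (E × E)) :=
  {π | π ∈ Coupling μ ν ∧ tCost π = W2sq μ ν}

/-- `Gamma ν μ1 μ2` : probability measures on `E × E × E` whose (1,2)-marginal is an optimal
plan between `ν` and `μ1` and whose (1,3)-marginal is an optimal plan between `ν` and `μ2`. -/
def Gamma {E : Type*} [NormedAddCommGroup E] [MeasurableSpace E]
    (ν μ1 μ2 : Measure E) : Set (Measure (E × E × E)) :=
  {ρ | IsProbabilityMeasure ρ ∧
    ρ.map (fun p => (p.1, p.2.1)) ∈ OptPlan ν μ1 ∧
    ρ.map (fun p => (p.1, p.2.2)) ∈ OptPlan ν μ2}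

/-- Cost `∫ ‖x1 − x2‖² dρ(y, x1, x2)` of a 3-plan. -/
def pivotCost {E : Type*} [NormedAddCommGroup E] [MeasurableSpace E]
    (ρ : Measure (E × E × E)) : ℝ :=
  ∫ p, ‖p.2.1 - p.2.2‖ ^ 2 ∂ρ

/-- Squared ν-based Wasserstein discrepancy. -/
def Wnusq {E : Type*} [NormedAddCommGroup E] [MeasurableSpace E]
    (ν μ1 μ2 : Measure E) : ℝ :=
  sInf (pivotCost '' Gamma ν μ1 μ2)

/-- ν-based Wasserstein discrepancy. -/
def Wnu {E : Type*} [NormedAddCommGroup E] [MeasurableSpace E]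
    (ν μ1 μ2 : Measure E) : ℝ :=
  Real.sqrt (Wnusq ν μ1 μ2)

/-- Weak convergence of a sequence of measures (against bounded continuous functions). -/
def WeakConv {E : Type*} [MeasurableSpace E] [TopologicalSpace E]
    (μs : ℕ → Measure E) (μ : Measure E) : Prop :=
  ∀ f : BoundedContinuousFunction E ℝ,
    Tendsto (fun n => ∫ x, f x ∂(μs n)) atTop (𝓝 (∫ x, f x ∂μ))

/-- Quantile function (pseudo-inverse c.d.f.) of a measure on ℝ. -/
def quantile (ν : Measure ℝ) (t : ℝ) : ℝ :=
  sInf {s : ℝ | ENNReal.ofReal t ≤ ν (Set.Iic s)}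

/-- Pushforward of `μ` by the projection `P_θ : x ↦ ⟪θ, x⟫`. -/
def projLine {d : ℕ} (θ : Euc d) (μ : Measure (Euc d)) : Measure ℝ :=
  μ.map (fun x => ⟪θ, x⟫)

/-- `μ_θ[μ1, μ2]` : the (unique) Wasserstein mean of `Q_θ#μ1` and `Q_θ#μ2`, given by the
explicit quantile formula `[(½ F_{ν1}^{[-1]} + ½ F_{ν2}^{[-1]})·θ]#L_{[0,1]}`. -/
def pivotMiddle {d : ℕ} (θ : Euc d) (μ1 μ2 : Measure (Euc d)) : Measure (Euc d) :=
  (volume.restrict (Set.Icc (0 : ℝ) 1)).map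
    (fun t => ((1 / 2) * quantile (projLine θ μ1) t
      + (1 / 2) * quantile (projLine θ μ2) t) • θ)

/-- Squared Pivot Sliced discrepancy. -/
def PSsq {d : ℕ} (θ : Euc d) (μ1 μ2 : Measure (Euc d)) : ℝ :=
  Wnusq (pivotMiddle θ μ1 μ2) μ1 μ2

/-- Pivot Sliced discrepancy. -/
def PS {d : ℕ} (θ : Euc d) (μ1 μ2 : Measure (Euc d)) : ℝ :=
  Real.sqrt (PSsq θ μ1 μ2)

/-- `π_θ[μ1, μ2]` : the unique optimal 1D plan between `P_θ#μ1` and `P_θ#μ2`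
(co-monotone quantile coupling). -/
def piTheta {d : ℕ} (θ : Euc d) (μ1 μ2 : Measure (Euc d)) : Measure (ℝ × ℝ) :=
  (volume.restrict (Set.Icc (0 : ℝ) 1)).map
    (fun t => (quantile (projLine θ μ1) t, quantile (projLine θ μ2) t))

/-- `Ω_θ(μ1, μ2)` : couplings of `μ1, μ2` whose projection by `(P_θ, P_θ)` is `π_θ[μ1, μ2]`. -/
def OmegaTheta {d : ℕ} (θ : Euc d) (μ1 μ2 : Measure (Euc d)) :
    Set (Measure (Euc d × Euc d)) :=
  {ω | ω ∈ Coupling μ1 μ2 ∧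
    ω.map (fun p => (⟪θ, p.1⟫, ⟪θ, p.2⟫)) = piTheta θ μ1 μ2}

/-- Squared constrained Wasserstein discrepancy `CW_θ²`. -/
def CWsq {d : ℕ} (θ : Euc d) (μ1 μ2 : Measure (Euc d)) : ℝ :=
  sInf (tCost '' OmegaTheta θ μ1 μ2)

/-- Wasserstein means: minimisers of `μ ↦ W₂²(μ1, μ) + W₂²(μ, μ2)` over `P2`. -/
def WMean {d : ℕ} (μ1 μ2 : Measure (Euc d)) : Set (Measure (Euc d)) :=
  {μ | μ ∈ (P2 : Set (Measure (Euc d))) ∧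
    ∀ μ' ∈ (P2 : Set (Measure (Euc d))),
      W2sq μ1 μ + W2sq μ μ2 ≤ W2sq μ1 μ' + W2sq μ' μ2}

/-- Uniform empirical measure `1/n ∑ δ_{x_i}`. -/
def empMeasure {d n : ℕ} (x : Fin n → Euc d) : Measure (Euc d) :=
  (n : ℝ≥0∞)⁻¹ • ∑ i, Measure.dirac (x i)

/-! Let `q₁`, `q₂` be the quantile functions of the two projected measures. Both are
nondecreasing, so `½q₁ - ½q₂` is a 1-Lipschitz function of the pivot coordinate `r = ½q₁ + ½q₂`;
hence `q₁ = f(r)` and `q₂ = g(r)` with `f`, `g` continuous and nondecreasing. A plan from a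
measure on the line `ℝθ` to `μᵢ` is optimal exactly when it maximises the correlation of the
`θ`-coordinates, and by the nonnegativity of a Bregman divergence this happens exactly when these
coordinates lie on the graph of `f` (resp. `g`). A 3-plan is therefore admissible exactly when its
last two points project to `(f(r), g(r))`, where `r` is the coordinate of the pivot point: this
gives the pair the projected law `π_θ`. Conversely `r = ½f(r) + ½g(r)` recovers the pivot point
from such a pair. -/

section Coupling

variable {E F : Type*} [MeasurableSpace E] [MeasurableSpace F] {μ : Measure E} {ν : Measure F}
  {π : Measure (E × F)}

theorem hasLaw_fst_of_mem_coupling (hπ : π ∈ Coupling μ ν) : HasLaw Prod.fst μ π :=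
  ⟨measurable_fst.aemeasurable, hπ.2.1⟩

theorem hasLaw_snd_of_mem_coupling (hπ : π ∈ Coupling μ ν) : HasLaw Prod.snd ν π :=
  ⟨measurable_snd.aemeasurable, hπ.2.2⟩

theorem map_prodMk_mem_coupling {Ω : Type*} [MeasurableSpace Ω] {P : Measure Ω}
    [IsProbabilityMeasure P] {X : Ω → E} {Y : Ω → F} (hX : HasLaw X μ P) (hY : HasLaw Y ν P) :
    P.map (fun ω => (X ω, Y ω)) ∈ Coupling μ ν :=
  ⟨Measure.isProbabilityMeasure_map (hX.aemeasurable.prodMk hY.aemeasurable),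
    (Measure.fst_map_prodMk₀ hY.aemeasurable).trans hX.map_eq,
    (Measure.snd_map_prodMk₀ hX.aemeasurable).trans hY.map_eq⟩

theorem memLp_comp_of_hasLaw {G : Type*} [NormedAddCommGroup G] {p : ℝ≥0∞} {Ω : Type*}
    [MeasurableSpace Ω] {P : Measure Ω} {X : Ω → E} {g : E → G} (hX : HasLaw X μ P)
    (hg : MemLp g p μ) : MemLp (fun ω => g (X ω)) p P :=
  MemLp.comp_of_map (hX.map_eq.symm ▸ hg) hX.aemeasurable

theorem integrable_comp_of_hasLaw {G : Type*} [NormedAddCommGroup G] {Ω : Type*}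
    [MeasurableSpace Ω] {P : Measure Ω} {X : Ω → E} {g : E → G} (hX : HasLaw X μ P)
    (hg : Integrable g μ) : Integrable (fun ω => g (X ω)) P :=
  memLp_one_iff_integrable.1 (memLp_comp_of_hasLaw hX (memLp_one_iff_integrable.2 hg))

/- Push `μ` through the disintegration of `ν` along `b`, precomposed with `a`. -/
theorem exists_mem_coupling_ae_eq [StandardBorelSpace F] {Z : Type*} [MeasurableSpace Z]
    [MeasurableEq Z] [IsProbabilityMeasure μ] [IsProbabilityMeasure ν] {a : E → Z} {b : F → Z}
    (ha : Measurable a) (hb : Measurable b) (hab : μ.map a = ν.map b) :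
    ∃ π ∈ Coupling μ ν, ∀ᵐ p ∂π, a p.1 = b p.2 := by
  have : Nonempty F := nonempty_of_isProbabilityMeasure ν
  set κ : Kernel Z F := condDistrib id b ν
  set π : Measure (E × F) := μ ⊗ₘ κ.comap a ha
  have hm : Measurable fun p : E × F => (a p.1, p.2) := by fun_prop
  have hπ : π.map (fun p => (a p.1, p.2)) = ν.map fun y => (b y, y) := by
    calc π.map (fun p => (a p.1, p.2)) = μ.map a ⊗ₘ κ := by
          ext s hs
          rw [Measure.map_apply hm hs, Measure.compProd_apply (hm hs), Measure.compProd_apply hs,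
            lintegral_map (Kernel.measurable_kernel_prodMk_left hs) ha]
          rfl
      _ = ν.map fun y => (b y, y) := by rw [hab]; exact compProd_map_condDistrib aemeasurable_id
  refine ⟨π, ⟨inferInstance, Measure.fst_compProd _ _, ?_⟩, ?_⟩
  · calc π.map Prod.snd = (π.map fun p => (a p.1, p.2)).map Prod.snd := by
          rw [Measure.map_map measurable_snd hm]; rfl
      _ = ν := by
          rw [hπ, Measure.map_map measurable_snd (by fun_prop)]; exact Measure.map_id
  · have hdiag : MeasurableSet {q : Z × F | q.1 = b q.2} :=
      measurableSet_eq_fun measurable_fst (hb.comp measurable_snd)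
    refine (ae_map_iff hm.aemeasurable hdiag).1 ?_
    rw [hπ, ae_map_iff (by fun_prop) hdiag]
    exact ae_of_all _ fun _ => rfl

end Coupling

section Quantile

/-- The uniform law on `[0, 1]`, under which quantile functions are read as random variables. -/
abbrev unitUniform : Measure ℝ := volume.restrict (Set.Icc (0 : ℝ) 1)

instance : IsProbabilityMeasure unitUniform := ⟨by simp⟩

theorem unitUniform_eq_restrict_Ioo : unitUniform = volume.restrict (Set.Ioo (0 : ℝ) 1) :=
  Measure.restrict_congr_set Ioo_ae_eq_Icc.symm

theorem ae_mem_Ioo_unitUniform : ∀ᵐ t ∂unitUniform, t ∈ Set.Ioo (0 : ℝ) 1 := by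
  rw [unitUniform_eq_restrict_Ioo]
  exact ae_restrict_mem measurableSet_Ioo

theorem unitUniform_Iic {c : ℝ} (hc : c ≤ 1) : unitUniform (Set.Iic c) = ENNReal.ofReal c := by
  have hinter : Set.Iic c ∩ Set.Icc 0 1 = Set.Icc 0 c := by grind
  rw [Measure.restrict_apply measurableSet_Iic, hinter, Real.volume_Icc, sub_zero]

variable (ν : Measure ℝ) [IsProbabilityMeasure ν]

theorem quantile_eq_sInf_cdf (t : ℝ) : quantile ν t = sInf {s : ℝ | t ≤ cdf ν s} := by
  simp only [quantile, ← ofReal_cdf, ENNReal.ofReal_le_ofReal_iff (cdf_nonneg ν _)]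

theorem quantile_le_iff {t : ℝ} (ht : t ∈ Set.Ioo (0 : ℝ) 1) (s : ℝ) :
    quantile ν t ≤ s ↔ t ≤ cdf ν s := by
  have hne : {s : ℝ | t ≤ cdf ν s}.Nonempty :=
    ((tendsto_cdf_atTop ν).eventually_const_le ht.2).exists
  have hbdd : BddBelow {s : ℝ | t ≤ cdf ν s} := by
    obtain ⟨a, ha⟩ := ((tendsto_cdf_atBot ν).eventually_lt_const ht.1).exists
    exact ⟨a, fun s hs => ((monotone_cdf ν).reflect_lt (ha.trans_le hs)).le⟩
  rw [quantile_eq_sInf_cdf]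
  refine ⟨fun h => ?_, fun h => csInf_le hbdd h⟩
  have hright : Tendsto (cdf ν) (𝓝[>] s) (𝓝 (cdf ν s)) :=
    ((cdf ν).right_continuous s).tendsto.mono_left (nhdsWithin_mono _ Set.Ioi_subset_Ici_self)
  refine ge_of_tendsto hright ?_
  filter_upwards [self_mem_nhdsWithin] with u hu
  obtain ⟨v, hv, hvu⟩ := exists_lt_of_csInf_lt hne (h.trans_lt hu)
  exact hv.trans (monotone_cdf ν hvu.le)

theorem monotoneOn_quantile : MonotoneOn (quantile ν) (Set.Ioo (0 : ℝ) 1) := fun _ hs _ ht hst =>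
  (quantile_le_iff ν hs _).2 (hst.trans ((quantile_le_iff ν ht _).1 le_rfl))

theorem aemeasurable_quantile : AEMeasurable (quantile ν) unitUniform := by
  rw [unitUniform_eq_restrict_Ioo]
  exact aemeasurable_restrict_of_monotoneOn measurableSet_Ioo (monotoneOn_quantile ν)

theorem hasLaw_quantile : HasLaw (quantile ν) ν unitUniform where
  aemeasurable := aemeasurable_quantile ν
  map_eq := by
    have := Measure.isProbabilityMeasure_map (aemeasurable_quantile ν)
    refine Measure.ext_of_Iic _ _ fun s => ?_
    have hpre : quantile ν ⁻¹' Set.Iic s =ᵐ[unitUniform] Set.Iic (cdf ν s) := by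
      filter_upwards [ae_mem_Ioo_unitUniform] with t ht
      exact propext (quantile_le_iff ν ht s)
    rw [Measure.map_apply_of_aemeasurable (aemeasurable_quantile ν) measurableSet_Iic,
      measure_congr hpre, unitUniform_Iic (cdf_le_one ν s), ofReal_cdf]

end Quantile

section Comonotone

theorem exists_lipschitzWith_comp_eqOn {α X : Type*} [PseudoMetricSpace X] {K : NNReal} {S : Set α}
    {m : α → X} {k : α → ℝ} (hkm : ∀ s ∈ S, ∀ t ∈ S, dist (k s) (k t) ≤ K * dist (m s) (m t)) :
    ∃ h : X → ℝ, LipschitzWith K h ∧ ∀ t ∈ S, h (m t) = k t := by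
  rcases isEmpty_or_nonempty α with _ | _
  · exact ⟨fun _ => 0, LipschitzWith.const' 0, fun t => isEmptyElim t⟩
  set r : X → α := Function.invFunOn m S
  have hr : ∀ t ∈ S, r (m t) ∈ S ∧ m (r (m t)) = m t := fun t ht =>
    Function.invFunOn_pos ⟨t, ht, rfl⟩
  have hk : ∀ t ∈ S, k (r (m t)) = k t := fun t ht => by
    have := hkm _ (hr t ht).1 t ht
    rwa [(hr t ht).2, dist_self, mul_zero, dist_le_zero] at this
  have hlip : LipschitzOnWith K (k ∘ r) (m '' S) := by
    refine LipschitzOnWith.of_dist_le_mul ?_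
    rintro _ ⟨s, hs, rfl⟩ _ ⟨t, ht, rfl⟩
    simpa only [Function.comp_apply, hk s hs, hk t ht] using hkm s hs t ht
  obtain ⟨h, hh, heq⟩ := hlip.extend_real
  exact ⟨h, hh, fun t ht => (heq ⟨t, ht, rfl⟩).symm.trans (hk t ht)⟩

theorem exists_lipschitzWith_half_sub {α : Type*} [LinearOrder α] {S : Set α} {q₁ q₂ : α → ℝ}
    (h₁ : MonotoneOn q₁ S) (h₂ : MonotoneOn q₂ S) :
    ∃ h : ℝ → ℝ, LipschitzWith 1 h ∧
      ∀ t ∈ S, h (1 / 2 * q₁ t + 1 / 2 * q₂ t) = 1 / 2 * q₁ t - 1 / 2 * q₂ t := by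
  refine exists_lipschitzWith_comp_eqOn fun s hs t ht => ?_
  have hcomonotone : 0 ≤ (q₁ s - q₁ t) * (q₂ s - q₂ t) := by
    rcases le_total s t with hst | hts
    · exact mul_nonneg_of_nonpos_of_nonpos (sub_nonpos.2 (h₁ hs ht hst))
        (sub_nonpos.2 (h₂ hs ht hst))
    · exact mul_nonneg (sub_nonneg.2 (h₁ ht hs hts)) (sub_nonneg.2 (h₂ ht hs hts))
  rw [NNReal.coe_one, one_mul, Real.dist_eq, Real.dist_eq, ← sq_le_sq]
  linear_combination hcomonotone

theorem monotone_id_add_of_lipschitzWith_one {h : ℝ → ℝ} (hh : LipschitzWith 1 h) :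
    Monotone fun r => r + h r := by
  intro a b hab
  have hdist := hh.dist_le_mul a b
  rw [NNReal.coe_one, one_mul, Real.dist_eq, Real.dist_eq, abs_sub_comm a b,
    abs_of_nonneg (sub_nonneg.2 hab)] at hdist
  change a + h a ≤ b + h b
  linarith [le_abs_self (h a - h b)]

theorem exists_monotone_comp_half_add {α : Type*} [LinearOrder α] {S : Set α} {q₁ q₂ : α → ℝ}
    (h₁ : MonotoneOn q₁ S) (h₂ : MonotoneOn q₂ S) :
    ∃ f g : ℝ → ℝ, (Continuous f ∧ Monotone f) ∧ (Continuous g ∧ Monotone g) ∧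
      (∀ r, 1 / 2 * f r + 1 / 2 * g r = r) ∧
      ∀ t ∈ S, f (1 / 2 * q₁ t + 1 / 2 * q₂ t) = q₁ t ∧ g (1 / 2 * q₁ t + 1 / 2 * q₂ t) = q₂ t := by
  obtain ⟨h, hh, hdiff⟩ := exists_lipschitzWith_half_sub h₁ h₂
  refine ⟨fun r => r + h r, fun r => r + -h r,
    ⟨continuous_id.add hh.continuous, monotone_id_add_of_lipschitzWith_one hh⟩,
    ⟨continuous_id.add hh.continuous.neg, monotone_id_add_of_lipschitzWith_one hh.neg⟩,
    fun r => by ring, fun t ht => ?_⟩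
  simp only [hdiff t ht]
  constructor <;> ring

end Comonotone

section Rearrangement

/-- The Bregman divergence of a primitive of `f`, written without choosing a primitive. For
nondecreasing `f` it measures the loss of correlation away from the graph of `f`. -/
def bregman (f : ℝ → ℝ) (y z : ℝ) : ℝ :=
  ∫ t in z..y, (f t - f z)

variable {f : ℝ → ℝ}

theorem bregman_nonneg (hf : Monotone f) (y z : ℝ) : 0 ≤ bregman f y z := by
  rcases le_total z y with hzy | hyz
  · exact intervalIntegral.integral_nonneg hzy fun t ht => sub_nonneg.2 (hf ht.1)
  · rw [bregman, intervalIntegral.integral_symm, ← intervalIntegral.integral_neg]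
    exact intervalIntegral.integral_nonneg hyz fun t ht => by
      rw [neg_sub]; exact sub_nonneg.2 (hf ht.2)

theorem eq_of_bregman_eq_zero (hc : Continuous f) (hf : Monotone f) {y z : ℝ}
    (h : bregman f y z = 0) : f y = f z := by
  have hmin : IsLocalMin (fun u => bregman f u z) y :=
    Eventually.of_forall fun u => h.le.trans (bregman_nonneg hf u z)
  have hderiv : HasDerivAt (fun u => bregman f u z) (f y - f z) y :=
    ((hc.sub continuous_const).integral_hasStrictDerivAt z y).hasDerivAt
  exact sub_eq_zero.1 (hmin.hasDerivAt_eq_zero hderiv)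

theorem bregman_eq_sub_primitive (hc : Continuous f) (y z : ℝ) :
    bregman f y z = (∫ t in (0 : ℝ)..y, f t) - (∫ t in (0 : ℝ)..z, f t) - y * f z + z * f z := by
  have hint : ∀ a b, IntervalIntegrable f volume a b := hc.intervalIntegrable
  rw [bregman, intervalIntegral.integral_sub (hint _ _) intervalIntegrable_const,
    intervalIntegral.integral_const, smul_eq_mul,
    ← intervalIntegral.integral_interval_sub_left (hint 0 y) (hint 0 z)]
  ring

variable {κ : Measure ℝ} [IsFiniteMeasure κ]

theorem integrable_primitive (hc : Continuous f) (hf : Monotone f) (hκ : MemLp id 2 κ)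
    (hfκ : MemLp f 2 κ) : Integrable (fun r => ∫ t in (0 : ℝ)..r, f t) κ := by
  have hlower : ∀ r, r * f 0 ≤ ∫ t in (0 : ℝ)..r, f t := fun r => by
    have := bregman_nonneg hf r 0
    rw [bregman_eq_sub_primitive hc, intervalIntegral.integral_same] at this
    linarith
  have hupper : ∀ r, ∫ t in (0 : ℝ)..r, f t ≤ r * f r := fun r => by
    have := bregman_nonneg hf 0 r
    rw [bregman_eq_sub_primitive hc, intervalIntegral.integral_same] at this
    linarith
  have hprim : Continuous fun r => ∫ t in (0 : ℝ)..r, f t :=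
    intervalIntegral.continuous_primitive hc.intervalIntegrable 0
  exact integrable_of_le_of_le hprim.aestronglyMeasurable (ae_of_all _ hlower)
    (ae_of_all _ hupper) ((hκ.integrable (by norm_num)).mul_const (f 0)) (hκ.integrable_mul hfκ)

theorem integrable_bregman_and_integral_eq (hc : Continuous f) (hf : Monotone f)
    (hκ : MemLp id 2 κ) (hfκ : MemLp f 2 κ) {Ω : Type*} [MeasurableSpace Ω] {P : Measure Ω}
    {Y Z : Ω → ℝ} (hY : HasLaw Y κ P) (hZ : HasLaw Z κ P) :
    Integrable (fun ω => bregman f (Y ω) (Z ω)) P ∧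
      ∫ ω, bregman f (Y ω) (Z ω) ∂P = ∫ r, r * f r ∂κ - ∫ ω, Y ω * f (Z ω) ∂P := by
  set φ : ℝ → ℝ := fun r => ∫ t in (0 : ℝ)..r, f t
  have hφ : Integrable φ κ := integrable_primitive hc hf hκ hfκ
  have hrf : Integrable (fun r => r * f r) κ := hκ.integrable_mul hfκ
  have hφY : Integrable (fun ω => φ (Y ω)) P := integrable_comp_of_hasLaw hY hφ
  have hφZ : Integrable (fun ω => φ (Z ω)) P := integrable_comp_of_hasLaw hZ hφ
  have hZZ : Integrable (fun ω => Z ω * f (Z ω)) P := integrable_comp_of_hasLaw hZ hrf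
  have hYZ : Integrable (fun ω => Y ω * f (Z ω)) P :=
    (memLp_comp_of_hasLaw (g := id) hY hκ).integrable_mul (memLp_comp_of_hasLaw hZ hfκ)
  have hφ_eq : ∫ ω, φ (Y ω) ∂P = ∫ ω, φ (Z ω) ∂P :=
    (hY.integral_comp hφ.1).trans (hZ.integral_comp hφ.1).symm
  have hZZ_eq : ∫ ω, Z ω * f (Z ω) ∂P = ∫ r, r * f r ∂κ := hZ.integral_comp hrf.1
  have hsplit : ∀ y z, bregman f y z = φ y - φ z - y * f z + z * f z :=
    bregman_eq_sub_primitive hc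
  have hdiff : Integrable (fun ω => φ (Y ω) - φ (Z ω)) P := hφY.sub hφZ
  have hdiff_corr : Integrable (fun ω => φ (Y ω) - φ (Z ω) - Y ω * f (Z ω)) P := hdiff.sub hYZ
  simp only [hsplit]
  refine ⟨hdiff_corr.add hZZ, ?_⟩
  rw [integral_add hdiff_corr hZZ, integral_sub hdiff hYZ, integral_sub hφY hφZ, hφ_eq, hZZ_eq]
  ring

variable {γ : Measure (ℝ × ℝ)}

/- Write the second coordinate of `γ` as `f Z`, with `Z` distributed as the first coordinate `Y`:
the primitive of `f` has the same mean along `Y` and `Z`, so only the correlations remain. -/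
theorem exists_coupling_integral_bregman_eq (hc : Continuous f) (hf : Monotone f)
    (hκ : MemLp id 2 κ) (hfκ : MemLp f 2 κ) (hγ : γ ∈ Coupling κ (κ.map f)) :
    ∃ σ ∈ Coupling γ κ, (∀ᵐ q ∂σ, q.1.2 = f q.2) ∧
      Integrable (fun q => bregman f q.1.1 q.2) σ ∧
      ∫ q, bregman f q.1.1 q.2 ∂σ = ∫ r, r * f r ∂κ - ∫ p, p.1 * p.2 ∂γ := by
  have : IsProbabilityMeasure γ := hγ.1
  have hY := hasLaw_fst_of_mem_coupling hγ
  have : IsProbabilityMeasure κ := hY.isProbabilityMeasure_iff.1 inferInstance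
  obtain ⟨σ, hσ, hglue⟩ := exists_mem_coupling_ae_eq measurable_snd hc.measurable hγ.2.2
  have hfst := hasLaw_fst_of_mem_coupling hσ
  obtain ⟨hint, heq⟩ := integrable_bregman_and_integral_eq hc hf hκ hfκ (hY.fun_comp hfst)
    (hasLaw_snd_of_mem_coupling hσ)
  have hcorr : ∫ q, q.1.1 * f q.2 ∂σ = ∫ p, p.1 * p.2 ∂γ := by
    rw [← hfst.integral_comp (f := fun p => p.1 * p.2) (by fun_prop)]
    exact integral_congr_ae (hglue.mono fun q hq => by simp only [Function.comp_apply, hq])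
  exact ⟨σ, hσ, hglue, hint, hcorr ▸ heq⟩

theorem integral_mul_le_of_mem_coupling_map (hc : Continuous f) (hf : Monotone f)
    (hκ : MemLp id 2 κ) (hfκ : MemLp f 2 κ) (hγ : γ ∈ Coupling κ (κ.map f)) :
    ∫ p, p.1 * p.2 ∂γ ≤ ∫ r, r * f r ∂κ := by
  obtain ⟨σ, -, -, -, heq⟩ := exists_coupling_integral_bregman_eq hc hf hκ hfκ hγ
  have hnonneg : 0 ≤ ∫ q, bregman f q.1.1 q.2 ∂σ :=
    integral_nonneg fun _ => bregman_nonneg hf _ _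
  linarith

theorem integral_mul_eq_iff_of_mem_coupling_map (hc : Continuous f) (hf : Monotone f)
    (hκ : MemLp id 2 κ) (hfκ : MemLp f 2 κ) (hγ : γ ∈ Coupling κ (κ.map f)) :
    ∫ p, p.1 * p.2 ∂γ = ∫ r, r * f r ∂κ ↔ ∀ᵐ p ∂γ, p.2 = f p.1 := by
  constructor
  · intro hmax
    obtain ⟨σ, hσ, hglue, hint, heq⟩ := exists_coupling_integral_bregman_eq hc hf hκ hfκ hγ
    rw [hmax, sub_self,
      integral_eq_zero_iff_of_nonneg (fun _ => bregman_nonneg hf _ _) hint] at heq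
    have hgraph : ∀ᵐ q ∂σ, q.1.2 = f q.1.1 := by
      filter_upwards [heq, hglue] with q hq hq2
      rw [hq2, eq_of_bregman_eq_zero hc hf hq]
    have hset : MeasurableSet {p : ℝ × ℝ | p.2 = f p.1} :=
      measurableSet_eq_fun measurable_snd (hc.measurable.comp measurable_fst)
    exact ((hasLaw_fst_of_mem_coupling hσ).ae_iff (measurableSet_setOfPred.1 hset)).1 hgraph
  · intro hgraph
    rw [← (hasLaw_fst_of_mem_coupling hγ).integral_comp (f := fun r => r * f r)
      (hκ.1.mul hfκ.1)]
    exact integral_congr_ae (hgraph.mono fun p hp => by simp only [Function.comp_apply, hp])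

end Rearrangement

section OptimalPlans

theorem memLp_id_of_mem_p2 {E : Type*} [NormedAddCommGroup E] [MeasurableSpace E] [BorelSpace E]
    [SecondCountableTopology E] {μ : Measure E} (hμ : μ ∈ (P2 : Set (Measure E))) :
    MemLp id 2 μ :=
  (memLp_two_iff_integrable_sq_norm (by fun_prop)).2 hμ.2

variable {E : Type*} [NormedAddCommGroup E] [InnerProductSpace ℝ E]

theorem inner_smul_self_of_norm_eq_one {θ : E} (hθ : ‖θ‖ = 1) (r : ℝ) : ⟪θ, r • θ⟫ = r := by
  rw [real_inner_smul_right, real_inner_self_eq_norm_sq, hθ, one_pow, mul_one]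

variable [MeasurableSpace E] [BorelSpace E]

/-- The pushforward of a law on `ℝ` to the line spanned by `θ`, through `r ↦ r • θ`;
the pivot measures `μ_θ[μ₁, μ₂]` are of this form. -/
def liftLine (θ : E) (κ : Measure ℝ) : Measure E :=
  κ.map fun r => r • θ

/-- The map `(P_θ, P_θ)`, projecting both points of a pair onto the direction `θ`. -/
def projPair (θ : E) (p : E × E) : ℝ × ℝ :=
  (⟪θ, p.1⟫, ⟪θ, p.2⟫)

/-- A continuous nondecreasing `f` transporting `κ` to the law `P_θ#μ` of the coordinate of `μ`
along `θ`. -/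
structure IsMonotoneTransport (f : ℝ → ℝ) (κ : Measure ℝ) (θ : E) (μ : Measure E) : Prop where
  continuous : Continuous f
  monotone : Monotone f
  identDistrib : IdentDistrib f (fun x => ⟪θ, x⟫) κ μ

variable {θ : E} {κ : Measure ℝ} {μ ν : Measure E} {π : Measure (E × E)} {f : ℝ → ℝ}

theorem measurable_inner_left (θ : E) : Measurable fun x : E => ⟪θ, x⟫ :=
  (innerSL ℝ θ).continuous.measurable

theorem measurable_projPair (θ : E) : Measurable (projPair θ) :=
  ((measurable_inner_left θ).comp measurable_fst).prodMk
    ((measurable_inner_left θ).comp measurable_snd)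

theorem hasLaw_smul_liftLine (θ : E) (κ : Measure ℝ) :
    HasLaw (fun r : ℝ => r • θ) (liftLine θ κ) κ :=
  ⟨by fun_prop, rfl⟩

theorem hasLaw_inner_liftLine (hθ : ‖θ‖ = 1) (κ : Measure ℝ) :
    HasLaw (fun y => ⟪θ, y⟫) κ (liftLine θ κ) where
  aemeasurable := (measurable_inner_left θ).aemeasurable
  map_eq := by
    rw [liftLine, Measure.map_map (measurable_inner_left θ) (by fun_prop), Function.comp_def]
    simp only [inner_smul_self_of_norm_eq_one hθ, Measure.map_id']

theorem map_projPair_mem_coupling (hθ : ‖θ‖ = 1) (hf : IsMonotoneTransport f κ θ μ)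
    (hπ : π ∈ Coupling (liftLine θ κ) μ) : π.map (projPair θ) ∈ Coupling κ (κ.map f) := by
  have : IsProbabilityMeasure π := hπ.1
  have hproj : HasLaw (fun x => ⟪θ, x⟫) (κ.map f) μ :=
    ⟨hf.identDistrib.aemeasurable_snd, hf.identDistrib.map_eq.symm⟩
  exact map_prodMk_mem_coupling
    ((hasLaw_inner_liftLine hθ κ).fun_comp (hasLaw_fst_of_mem_coupling hπ))
    (hproj.fun_comp (hasLaw_snd_of_mem_coupling hπ))

theorem ae_map_projPair_iff (hf : Measurable f) :
    (∀ᵐ q ∂π.map (projPair θ), q.2 = f q.1) ↔ ∀ᵐ p ∂π, ⟪θ, p.2⟫ = f ⟪θ, p.1⟫ :=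
  ae_map_iff (measurable_projPair θ).aemeasurable
    (measurableSet_eq_fun measurable_snd (hf.comp measurable_fst))

theorem liftLine_mem_p2 (hθ : ‖θ‖ = 1) [IsProbabilityMeasure κ] (hκ : MemLp id 2 κ) :
    liftLine θ κ ∈ (P2 : Set (Measure E)) := by
  have hlaw := hasLaw_smul_liftLine θ κ
  refine ⟨hlaw.isProbabilityMeasure_iff.1 inferInstance, ?_⟩
  rw [liftLine, integrable_map_measure (by fun_prop) hlaw.aemeasurable]
  simpa only [Function.comp_def, norm_smul, hθ, mul_one, id_eq] using
    hκ.integrable_norm_pow two_ne_zero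

variable [SecondCountableTopology E]

theorem tCost_eq_of_mem_coupling (hμ : μ ∈ (P2 : Set (Measure E)))
    (hν : ν ∈ (P2 : Set (Measure E))) (hπ : π ∈ Coupling μ ν) :
    tCost π = ∫ x, ‖x‖ ^ 2 ∂μ + ∫ y, ‖y‖ ^ 2 ∂ν - 2 * ∫ p, ⟪p.1, p.2⟫ ∂π := by
  have hfst := hasLaw_fst_of_mem_coupling hπ
  have hsnd := hasLaw_snd_of_mem_coupling hπ
  have hint1 : Integrable (fun p : E × E => ‖p.1‖ ^ 2) π := integrable_comp_of_hasLaw hfst hμ.2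
  have hint2 : Integrable (fun p : E × E => ‖p.2‖ ^ 2) π := integrable_comp_of_hasLaw hsnd hν.2
  have hfst2 : MemLp (fun p : E × E => p.1) 2 π :=
    memLp_comp_of_hasLaw (g := id) hfst (memLp_id_of_mem_p2 hμ)
  have hsnd2 : MemLp (fun p : E × E => p.2) 2 π :=
    memLp_comp_of_hasLaw (g := id) hsnd (memLp_id_of_mem_p2 hν)
  have hinner : Integrable (fun p : E × E => ⟪p.1, p.2⟫) π :=
    (hfst2.norm.integrable_mul hsnd2.norm).mono' (by fun_prop)
      (ae_of_all _ fun p => norm_inner_le_norm p.1 p.2)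
  rw [← hfst.integral_comp hμ.2.1, ← hsnd.integral_comp hν.2.1, tCost]
  simp only [norm_sub_sq_real, Function.comp_def]
  rw [integral_add (by fun_prop) hint2, integral_sub hint1 (by fun_prop), integral_const_mul]
  ring

theorem ae_eq_smul_liftLine (hθ : ‖θ‖ = 1) (κ : Measure ℝ) :
    ∀ᵐ y ∂liftLine θ κ, y = ⟪θ, y⟫ • θ := by
  have hset : MeasurableSet {y : E | y = ⟪θ, y⟫ • θ} :=
    measurableSet_eq_fun measurable_id ((measurable_inner_left θ).smul_const θ)
  refine (ae_map_iff (by fun_prop) hset).2 (ae_of_all _ fun r => ?_)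
  rw [inner_smul_self_of_norm_eq_one hθ]

theorem integral_inner_eq_of_mem_coupling_liftLine (hθ : ‖θ‖ = 1)
    (hπ : π ∈ Coupling (liftLine θ κ) μ) :
    ∫ p, ⟪p.1, p.2⟫ ∂π = ∫ q, q.1 * q.2 ∂π.map (projPair θ) := by
  rw [integral_map (measurable_projPair θ).aemeasurable (by fun_prop)]
  have hline : ∀ᵐ p ∂π, p.1 = ⟪θ, p.1⟫ • θ :=
    ae_of_ae_map measurable_fst.aemeasurable (hπ.2.1.symm ▸ ae_eq_smul_liftLine hθ κ)
  refine integral_congr_ae (hline.mono fun p hp => ?_)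
  calc ⟪p.1, p.2⟫ = ⟪⟪θ, p.1⟫ • θ, p.2⟫ := by rw [← hp]
    _ = ⟪θ, p.1⟫ * ⟪θ, p.2⟫ := real_inner_smul_left _ _ _

namespace IsMonotoneTransport

theorem memLp (hf : IsMonotoneTransport f κ θ μ) (hμ : μ ∈ (P2 : Set (Measure E))) :
    MemLp f 2 κ :=
  hf.identDistrib.symm.memLp_snd ((memLp_id_of_mem_p2 hμ).const_inner θ)

variable [CompleteSpace E] [IsProbabilityMeasure κ]

theorem exists_mem_coupling_liftLine (hf : IsMonotoneTransport f κ θ μ) (hθ : ‖θ‖ = 1)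
    (hμ : μ ∈ (P2 : Set (Measure E))) :
    ∃ π ∈ Coupling (liftLine θ κ) μ, ∀ᵐ p ∂π, ⟪θ, p.2⟫ = f ⟪θ, p.1⟫ := by
  have : IsProbabilityMeasure μ := hμ.1
  have : IsProbabilityMeasure (liftLine θ κ) :=
    (hasLaw_smul_liftLine θ κ).isProbabilityMeasure_iff.1 inferInstance
  have hθm := measurable_inner_left θ
  have hfm := hf.continuous.measurable
  have hlaw : (liftLine θ κ).map (f ∘ fun y => ⟪θ, y⟫) = μ.map fun x => ⟪θ, x⟫ := by
    rw [← Measure.map_map hfm hθm, (hasLaw_inner_liftLine hθ κ).map_eq, hf.identDistrib.map_eq]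
  obtain ⟨π, hπ, hgraph⟩ := exists_mem_coupling_ae_eq (hfm.comp hθm) hθm hlaw
  exact ⟨π, hπ, hgraph.mono fun _ => Eq.symm⟩

theorem w2sq_liftLine (hf : IsMonotoneTransport f κ θ μ) (hθ : ‖θ‖ = 1) (hκ : MemLp id 2 κ)
    (hμ : μ ∈ (P2 : Set (Measure E))) :
    W2sq (liftLine θ κ) μ =
      ∫ y, ‖y‖ ^ 2 ∂liftLine θ κ + ∫ x, ‖x‖ ^ 2 ∂μ - 2 * ∫ r, r * f r ∂κ := by
  have hν := liftLine_mem_p2 hθ hκ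
  refine IsLeast.csInf_eq ⟨?_, ?_⟩
  · obtain ⟨π, hπ, hgraph⟩ := hf.exists_mem_coupling_liftLine hθ hμ
    have hmax := (integral_mul_eq_iff_of_mem_coupling_map hf.continuous hf.monotone hκ
      (hf.memLp hμ) (map_projPair_mem_coupling hθ hf hπ)).2
      ((ae_map_projPair_iff hf.continuous.measurable).2 hgraph)
    exact ⟨π, hπ, by rw [tCost_eq_of_mem_coupling hν hμ hπ,
      integral_inner_eq_of_mem_coupling_liftLine hθ hπ, hmax]⟩
  · rintro _ ⟨π, hπ, rfl⟩
    rw [tCost_eq_of_mem_coupling hν hμ hπ, integral_inner_eq_of_mem_coupling_liftLine hθ hπ]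
    gcongr
    exact integral_mul_le_of_mem_coupling_map hf.continuous hf.monotone hκ (hf.memLp hμ)
      (map_projPair_mem_coupling hθ hf hπ)

theorem mem_optPlan_liftLine_iff (hf : IsMonotoneTransport f κ θ μ) (hθ : ‖θ‖ = 1)
    (hκ : MemLp id 2 κ) (hμ : μ ∈ (P2 : Set (Measure E))) (hπ : π ∈ Coupling (liftLine θ κ) μ) :
    π ∈ OptPlan (liftLine θ κ) μ ↔ ∀ᵐ p ∂π, ⟪θ, p.2⟫ = f ⟪θ, p.1⟫ := by
  calc π ∈ OptPlan (liftLine θ κ) μ ↔ tCost π = W2sq (liftLine θ κ) μ := and_iff_right hπ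
    _ ↔ ∫ q, q.1 * q.2 ∂π.map (projPair θ) = ∫ r, r * f r ∂κ := by
        rw [hf.w2sq_liftLine hθ hκ hμ, tCost_eq_of_mem_coupling (liftLine_mem_p2 hθ hκ) hμ hπ,
          sub_right_inj, mul_right_inj' two_ne_zero,
          integral_inner_eq_of_mem_coupling_liftLine hθ hπ]
    _ ↔ ∀ᵐ q ∂π.map (projPair θ), q.2 = f q.1 :=
        integral_mul_eq_iff_of_mem_coupling_map hf.continuous hf.monotone hκ (hf.memLp hμ)
          (map_projPair_mem_coupling hθ hf hπ)
    _ ↔ ∀ᵐ p ∂π, ⟪θ, p.2⟫ = f ⟪θ, p.1⟫ := ae_map_projPair_iff hf.continuous.measurable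

theorem map_prodMk_mem_optPlan_liftLine_iff (hf : IsMonotoneTransport f κ θ μ) (hθ : ‖θ‖ = 1)
    (hκ : MemLp id 2 κ) (hμ : μ ∈ (P2 : Set (Measure E))) {Ω : Type*} [MeasurableSpace Ω]
    {P : Measure Ω} [IsProbabilityMeasure P] {Y X : Ω → E} (hY : HasLaw Y (liftLine θ κ) P)
    (hX : HasLaw X μ P) :
    P.map (fun ω => (Y ω, X ω)) ∈ OptPlan (liftLine θ κ) μ ↔
      ∀ᵐ ω ∂P, ⟪θ, X ω⟫ = f ⟪θ, Y ω⟫ := by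
  have hθm := measurable_inner_left θ
  rw [hf.mem_optPlan_liftLine_iff hθ hκ hμ (map_prodMk_mem_coupling hY hX)]
  exact ae_map_iff (hY.aemeasurable.prodMk hX.aemeasurable)
    (measurableSet_eq_fun (hθm.comp measurable_snd)
      (hf.continuous.measurable.comp (hθm.comp measurable_fst)))

end IsMonotoneTransport

end OptimalPlans

section Pivot

theorem pivotCost_eq_tCost_map_snd {E : Type*} [NormedAddCommGroup E] [MeasurableSpace E]
    [BorelSpace E] [SecondCountableTopology E] (ρ : Measure (E × E × E)) :
    pivotCost ρ = tCost (ρ.map Prod.snd) := by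
  have hcost : StronglyMeasurable fun p : E × E => ‖p.1 - p.2‖ ^ 2 := by fun_prop
  exact (integral_map measurable_snd.aemeasurable hcost.aestronglyMeasurable).symm

theorem map_snd_map_prodMk_id {X Y : Type*} [MeasurableSpace X] [MeasurableSpace Y]
    {μ : Measure X} {h : X → Y} (hh : Measurable h) :
    (μ.map fun x => (h x, x)).map Prod.snd = μ :=
  (Measure.snd_map_prodMk hh).trans Measure.map_id

variable {κ : Measure ℝ} {f g : ℝ → ℝ}

theorem memLp_id_of_half_add_eq {p : ℝ≥0∞} (hf : MemLp f p κ) (hg : MemLp g p κ)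
    (hfg : ∀ r, 1 / 2 * f r + 1 / 2 * g r = r) : MemLp id p κ :=
  ((hf.const_mul (1 / 2)).add (hg.const_mul (1 / 2))).ae_eq (ae_of_all _ hfg)

theorem hasLaw_half_add_map_prodMk (hf : Measurable f) (hg : Measurable g)
    (hfg : ∀ r, 1 / 2 * f r + 1 / 2 * g r = r) :
    HasLaw (fun q : ℝ × ℝ => 1 / 2 * q.1 + 1 / 2 * q.2) κ (κ.map fun r => (f r, g r)) where
  aemeasurable := by fun_prop
  map_eq := by
    rw [Measure.map_map (by fun_prop) (hf.prodMk hg), Function.comp_def]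
    simp only [hfg, Measure.map_id']

theorem ae_map_prodMk_eq_half_add (hf : Measurable f) (hg : Measurable g)
    (hfg : ∀ r, 1 / 2 * f r + 1 / 2 * g r = r) :
    ∀ᵐ q ∂κ.map fun r => (f r, g r),
      q = (f (1 / 2 * q.1 + 1 / 2 * q.2), g (1 / 2 * q.1 + 1 / 2 * q.2)) := by
  have hgraph : MeasurableSet {q : ℝ × ℝ |
      q = (f (1 / 2 * q.1 + 1 / 2 * q.2), g (1 / 2 * q.1 + 1 / 2 * q.2))} :=
    measurableSet_eq_fun (by fun_prop) (by fun_prop)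
  rw [ae_map_iff (hf.prodMk hg).aemeasurable hgraph]
  exact ae_of_all _ fun r => by simp only [hfg]

variable {E : Type*} [NormedAddCommGroup E] [InnerProductSpace ℝ E] [MeasurableSpace E]
  [BorelSpace E] [SecondCountableTopology E] [CompleteSpace E] {θ : E} [IsProbabilityMeasure κ]
  {μ₁ μ₂ : Measure E}

theorem mem_gamma_liftLine_iff (hθ : ‖θ‖ = 1) (hκ : MemLp id 2 κ)
    (h₁ : μ₁ ∈ (P2 : Set (Measure E))) (h₂ : μ₂ ∈ (P2 : Set (Measure E)))
    (hf : IsMonotoneTransport f κ θ μ₁) (hg : IsMonotoneTransport g κ θ μ₂)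
    {ρ : Measure (E × E × E)} :
    ρ ∈ Gamma (liftLine θ κ) μ₁ μ₂ ↔
      HasLaw Prod.fst (liftLine θ κ) ρ ∧ ρ.map Prod.snd ∈ Coupling μ₁ μ₂ ∧
        ∀ᵐ p ∂ρ, projPair θ p.2 = (f ⟪θ, p.1⟫, g ⟪θ, p.1⟫) := by
  have hopt (hρ : IsProbabilityMeasure ρ) (hY : HasLaw Prod.fst (liftLine θ κ) ρ)
      (hX₁ : HasLaw (fun p => p.2.1) μ₁ ρ) (hX₂ : HasLaw (fun p => p.2.2) μ₂ ρ) :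
      ρ ∈ Gamma (liftLine θ κ) μ₁ μ₂ ↔
        ∀ᵐ p ∂ρ, projPair θ p.2 = (f ⟪θ, p.1⟫, g ⟪θ, p.1⟫) := by
    simp only [projPair, Prod.mk.injEq, eventually_and,
      ← hf.map_prodMk_mem_optPlan_liftLine_iff hθ hκ h₁ hY hX₁,
      ← hg.map_prodMk_mem_optPlan_liftLine_iff hθ hκ h₂ hY hX₂]
    exact and_iff_right hρ
  constructor
  · intro hΓ
    have : IsProbabilityMeasure ρ := hΓ.1
    have hY : HasLaw Prod.fst (liftLine θ κ) ρ :=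
      (hasLaw_fst_of_mem_coupling hΓ.2.1.1).fun_comp ⟨by fun_prop, rfl⟩
    have hX₁ : HasLaw (fun p => p.2.1) μ₁ ρ :=
      (hasLaw_snd_of_mem_coupling hΓ.2.1.1).fun_comp ⟨by fun_prop, rfl⟩
    have hX₂ : HasLaw (fun p => p.2.2) μ₂ ρ :=
      (hasLaw_snd_of_mem_coupling hΓ.2.2.1).fun_comp (X := fun p : E × E × E => (p.1, p.2.2))
        ⟨by fun_prop, rfl⟩
    exact ⟨hY, map_prodMk_mem_coupling hX₁ hX₂, (hopt hΓ.1 hY hX₁ hX₂).1 hΓ⟩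
  · rintro ⟨hY, hω, hgraph⟩
    have hsnd : HasLaw Prod.snd (ρ.map Prod.snd) ρ := ⟨measurable_snd.aemeasurable, rfl⟩
    have hρ : IsProbabilityMeasure ρ := hsnd.isProbabilityMeasure_iff.2 hω.1
    exact (hopt hρ hY ((hasLaw_fst_of_mem_coupling hω).fun_comp hsnd)
      ((hasLaw_snd_of_mem_coupling hω).fun_comp hsnd)).2 hgraph

theorem map_projPair_map_snd_of_mem_gamma_liftLine (hθ : ‖θ‖ = 1) (hκ : MemLp id 2 κ)
    (h₁ : μ₁ ∈ (P2 : Set (Measure E))) (h₂ : μ₂ ∈ (P2 : Set (Measure E)))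
    (hf : IsMonotoneTransport f κ θ μ₁) (hg : IsMonotoneTransport g κ θ μ₂)
    {ρ : Measure (E × E × E)} (hρ : ρ ∈ Gamma (liftLine θ κ) μ₁ μ₂) :
    (ρ.map Prod.snd).map (projPair θ) = κ.map fun r => (f r, g r) := by
  obtain ⟨hY, -, hgraph⟩ := (mem_gamma_liftLine_iff hθ hκ h₁ h₂ hf hg).1 hρ
  have hproj : HasLaw (fun p => ⟪θ, p.1⟫) κ ρ := (hasLaw_inner_liftLine hθ κ).fun_comp hY
  have hfg : Measurable fun r => (f r, g r) := (hf.continuous.prodMk hg.continuous).measurable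
  calc (ρ.map Prod.snd).map (projPair θ)
      = ρ.map fun p => projPair θ p.2 := Measure.map_map (measurable_projPair θ) measurable_snd
    _ = ρ.map fun p => (f ⟪θ, p.1⟫, g ⟪θ, p.1⟫) := Measure.map_congr hgraph
    _ = κ.map fun r => (f r, g r) := (HasLaw.fun_comp ⟨hfg.aemeasurable, rfl⟩ hproj).map_eq

/- As `½f + ½g = id`, the pivot point of a pair projecting onto the graph of `(f, g)` must be the
midpoint of its two projections. -/
theorem map_midpoint_mem_gamma_liftLine (hθ : ‖θ‖ = 1) (hκ : MemLp id 2 κ)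
    (h₁ : μ₁ ∈ (P2 : Set (Measure E))) (h₂ : μ₂ ∈ (P2 : Set (Measure E)))
    (hf : IsMonotoneTransport f κ θ μ₁) (hg : IsMonotoneTransport g κ θ μ₂)
    (hfg : ∀ r, 1 / 2 * f r + 1 / 2 * g r = r) {ω : Measure (E × E)} (hω : ω ∈ Coupling μ₁ μ₂)
    (hlaw : HasLaw (projPair θ) (κ.map fun r => (f r, g r)) ω) :
    ω.map (fun p => ((1 / 2 * ⟪θ, p.1⟫ + 1 / 2 * ⟪θ, p.2⟫) • θ, p)) ∈
      Gamma (liftLine θ κ) μ₁ μ₂ := by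
  have hfm := hf.continuous.measurable
  have hgm := hg.continuous.measurable
  set m : E × E → ℝ := fun p => 1 / 2 * ⟪θ, p.1⟫ + 1 / 2 * ⟪θ, p.2⟫
  have hm : Measurable m := by fun_prop
  have hm_law : HasLaw m κ ω := (hasLaw_half_add_map_prodMk hfm hgm hfg).fun_comp hlaw
  have hgraph : ∀ᵐ p ∂ω, projPair θ p = (f (m p), g (m p)) :=
    ae_of_ae_map hlaw.aemeasurable (hlaw.map_eq.symm ▸ ae_map_prodMk_eq_half_add hfm hgm hfg)
  refine (mem_gamma_liftLine_iff hθ hκ h₁ h₂ hf hg).2 ⟨⟨by fun_prop, ?_⟩, ?_, ?_⟩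
  · exact (Measure.fst_map_prodMk measurable_id).trans
      ((hasLaw_smul_liftLine θ κ).fun_comp hm_law).map_eq
  · rwa [map_snd_map_prodMk_id (hm.smul_const θ)]
  · have hPm := measurable_projPair θ
    refine (ae_map_iff (by fun_prop) (measurableSet_eq_fun (by fun_prop) (by fun_prop))).2 ?_
    simpa only [inner_smul_self_of_norm_eq_one hθ] using hgraph

theorem image_snd_gamma_liftLine (hθ : ‖θ‖ = 1) (h₁ : μ₁ ∈ (P2 : Set (Measure E)))
    (h₂ : μ₂ ∈ (P2 : Set (Measure E))) (hf : IsMonotoneTransport f κ θ μ₁)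
    (hg : IsMonotoneTransport g κ θ μ₂) (hfg : ∀ r, 1 / 2 * f r + 1 / 2 * g r = r) :
    (fun ρ : Measure (E × E × E) => ρ.map Prod.snd) '' Gamma (liftLine θ κ) μ₁ μ₂ =
      {ω | ω ∈ Coupling μ₁ μ₂ ∧ ω.map (projPair θ) = κ.map fun r => (f r, g r)} := by
  have hκ : MemLp id 2 κ := memLp_id_of_half_add_eq (hf.memLp h₁) (hg.memLp h₂) hfg
  ext ω
  constructor
  · rintro ⟨ρ, hρ, rfl⟩
    exact ⟨((mem_gamma_liftLine_iff hθ hκ h₁ h₂ hf hg).1 hρ).2.1,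
      map_projPair_map_snd_of_mem_gamma_liftLine hθ hκ h₁ h₂ hf hg hρ⟩
  · rintro ⟨hω, hlaw⟩
    exact ⟨_, map_midpoint_mem_gamma_liftLine hθ hκ h₁ h₂ hf hg hfg hω
      ⟨(measurable_projPair θ).aemeasurable, hlaw⟩, map_snd_map_prodMk_id (by fun_prop)⟩

end Pivot

section QuantileCoupling

/-- The comonotone coupling of `α` and `β`: the joint law of their quantile functions. -/
def quantileCoupling (α β : Measure ℝ) : Measure (ℝ × ℝ) :=
  unitUniform.map fun t => (quantile α t, quantile β t)

/-- The one-dimensional Wasserstein mean of `α` and `β`: the law of the average of their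
quantile functions. -/
def quantileMidpoint (α β : Measure ℝ) : Measure ℝ :=
  unitUniform.map fun t => 1 / 2 * quantile α t + 1 / 2 * quantile β t

variable (α β : Measure ℝ) [IsProbabilityMeasure α] [IsProbabilityMeasure β]

theorem hasLaw_quantileMidpoint :
    HasLaw (fun t => 1 / 2 * quantile α t + 1 / 2 * quantile β t) (quantileMidpoint α β)
      unitUniform :=
  ⟨((aemeasurable_quantile α).const_mul _).add ((aemeasurable_quantile β).const_mul _), rfl⟩

instance : IsProbabilityMeasure (quantileMidpoint α β) :=
  (hasLaw_quantileMidpoint α β).isProbabilityMeasure_iff.1 inferInstance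

theorem quantileCoupling_mem_coupling : quantileCoupling α β ∈ Coupling α β :=
  map_prodMk_mem_coupling (hasLaw_quantile α) (hasLaw_quantile β)

theorem exists_monotone_map_quantileMidpoint :
    ∃ f g : ℝ → ℝ, (Continuous f ∧ Monotone f) ∧ (Continuous g ∧ Monotone g) ∧
      (∀ r, 1 / 2 * f r + 1 / 2 * g r = r) ∧
      (quantileMidpoint α β).map (fun r => (f r, g r)) = quantileCoupling α β := by
  obtain ⟨f, g, hf, hg, hfg, hquantile⟩ :=
    exists_monotone_comp_half_add (monotoneOn_quantile α) (monotoneOn_quantile β)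
  refine ⟨f, g, hf, hg, hfg, ?_⟩
  have hm : Measurable fun r => (f r, g r) := (hf.1.prodMk hg.1).measurable
  calc (quantileMidpoint α β).map (fun r => (f r, g r))
      = unitUniform.map fun t =>
          (f (1 / 2 * quantile α t + 1 / 2 * quantile β t),
            g (1 / 2 * quantile α t + 1 / 2 * quantile β t)) :=
        AEMeasurable.map_map_of_aemeasurable hm.aemeasurable
          (hasLaw_quantileMidpoint α β).aemeasurable
    _ = quantileCoupling α β := Measure.map_congr (ae_mem_Ioo_unitUniform.mono fun t ht =>
        Prod.ext (hquantile t ht).1 (hquantile t ht).2)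

theorem exists_isMonotoneTransport_quantileMidpoint {α β : Measure ℝ} [IsProbabilityMeasure α]
    [IsProbabilityMeasure β] {E : Type*} [NormedAddCommGroup E] [InnerProductSpace ℝ E]
    [MeasurableSpace E] {θ : E} {μ₁ μ₂ : Measure E} (hα : HasLaw (fun x => ⟪θ, x⟫) α μ₁)
    (hβ : HasLaw (fun x => ⟪θ, x⟫) β μ₂) :
    ∃ f g : ℝ → ℝ, IsMonotoneTransport f (quantileMidpoint α β) θ μ₁ ∧
      IsMonotoneTransport g (quantileMidpoint α β) θ μ₂ ∧
      (∀ r, 1 / 2 * f r + 1 / 2 * g r = r) ∧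
      (quantileMidpoint α β).map (fun r => (f r, g r)) = quantileCoupling α β := by
  obtain ⟨f, g, hf, hg, hfg, hpair⟩ := exists_monotone_map_quantileMidpoint α β
  have hlaw : HasLaw (fun r => (f r, g r)) (quantileCoupling α β) (quantileMidpoint α β) :=
    ⟨(hf.1.prodMk hg.1).aemeasurable, hpair⟩
  have hmem := quantileCoupling_mem_coupling α β
  exact ⟨f, g,
    ⟨hf.1, hf.2, ((hasLaw_fst_of_mem_coupling hmem).fun_comp hlaw).identDistrib hα⟩,
    ⟨hg.1, hg.2, ((hasLaw_snd_of_mem_coupling hmem).fun_comp hlaw).identDistrib hβ⟩, hfg, hpair⟩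

end QuantileCoupling

section PivotMiddle

variable {d : ℕ} (θ : Euc d)

theorem hasLaw_inner_projLine (μ : Measure (Euc d)) :
    HasLaw (fun x => ⟪θ, x⟫) (projLine θ μ) μ :=
  ⟨(measurable_inner_left θ).aemeasurable, rfl⟩

instance (μ : Measure (Euc d)) [IsProbabilityMeasure μ] : IsProbabilityMeasure (projLine θ μ) :=
  (hasLaw_inner_projLine θ μ).isProbabilityMeasure_iff.1 inferInstance

theorem pivotMiddle_eq_liftLine (μ₁ μ₂ : Measure (Euc d)) [IsProbabilityMeasure μ₁]
    [IsProbabilityMeasure μ₂] :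
    pivotMiddle θ μ₁ μ₂ = liftLine θ (quantileMidpoint (projLine θ μ₁) (projLine θ μ₂)) :=
  ((hasLaw_smul_liftLine θ _).fun_comp (hasLaw_quantileMidpoint _ _)).map_eq

end PivotMiddle

/-- the set of (2,3)-bimarginals of admissible 3-plans based on the pivot
`μ_θ[μ1, μ2]` equals `Ω_θ(μ1, μ2)`, and consequently `PS_θ(μ1, μ2) = CW_θ(μ1, μ2)`. -/
theorem PS_eq_CW {d : ℕ} (θ : Euc d) (hθ : ‖θ‖ = 1) (μ1 μ2 : Measure (Euc d))
    (h1 : μ1 ∈ (P2 : Set (Measure (Euc d)))) (h2 : μ2 ∈ (P2 : Set (Measure (Euc d)))) :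
    ((fun ρ : Measure (Euc d × Euc d × Euc d) => ρ.map Prod.snd) ''
        Gamma (pivotMiddle θ μ1 μ2) μ1 μ2 = OmegaTheta θ μ1 μ2) ∧
    PSsq θ μ1 μ2 = CWsq θ μ1 μ2 := by
  have : IsProbabilityMeasure μ1 := h1.1
  have : IsProbabilityMeasure μ2 := h2.1
  obtain ⟨f, g, hf, hg, hfg, hpair⟩ := exists_isMonotoneTransport_quantileMidpoint
    (hasLaw_inner_projLine θ μ1) (hasLaw_inner_projLine θ μ2)
  have hΓ : (fun ρ : Measure (Euc d × Euc d × Euc d) => ρ.map Prod.snd) ''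
      Gamma (pivotMiddle θ μ1 μ2) μ1 μ2 = OmegaTheta θ μ1 μ2 := by
    rw [pivotMiddle_eq_liftLine, image_snd_gamma_liftLine hθ h1 h2 hf hg hfg, hpair]
    rfl
  refine ⟨hΓ, ?_⟩
  simp only [PSsq, Wnusq, CWsq, ← hΓ, Set.image_image, ← pivotCost_eq_tCost_map_snd]

end
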